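/- arXiv:1409.3142 — 2 statements merged into one kernel-verified Lean document; each statement's English description precedes it below -/
import Mathlib

section
/- (The tilde map is a chain map) Let N ≥ 0 and let σ ∈ Ω^N be invariant. Then d(σ_1(x)) = −(dσ)_1(x) for all x ∈ 𝔤, and for every k ≥ 2 and all x_1,…,x_k ∈ 𝔤: (−1)^k·d(σ_k(x_1,…,x_k)) = (d_𝔤 σ_{k−1})(x_1,…,x_k) + (dσ)_k(x_1,…,x_k), where (dσ)_k is the construction σ ↦ σ_k applied to dσ ∈ Ω^{N+1}. Equivalently, setting σ̃ := Σ_{k≥1} (−1)^{k−1}σ_k, the assignment σ ↦ σ̃ intertwines d with the total differential d_tot acting on a family (ψ_k) of multilinear maps 𝔤^k → Ω by d_𝔤ψ_k + (−1)^k dψ_k, i.e., d_tot(σ̃) = (dσ)~. -/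
/-- Cartan calculus data over ℝ: a module `carrier` with graded pieces `deg i`
(`deg i = ⊥` for `i < 0`), a degree-`+1` differential `d` squaring to zero,
a real Lie algebra `X`, contractions `ι v` of degree `-1` depending linearly on `v`,
pairwise anticommuting, and satisfying the Cartan relation
`𝓛_v ∘ ι_w - ι_w ∘ 𝓛_v = ι_[v,w]` where `𝓛_v = d ∘ ι_v + ι_v ∘ d`. -/
structure CartanCalculus where
  carrier : Type
  [addCommGroup : AddCommGroup carrier]
  [module : Module ℝ carrier]
  deg : ℤ → Submodule ℝ carrier
  deg_neg : ∀ i : ℤ, i < 0 → deg i = ⊥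
  d : carrier →ₗ[ℝ] carrier
  d_deg : ∀ i : ℤ, ∀ a ∈ deg i, d a ∈ deg (i + 1)
  d_d : ∀ a : carrier, d (d a) = 0
  X : Type
  [lieRingX : LieRing X]
  [lieAlgebraX : LieAlgebra ℝ X]
  ι : X →ₗ[ℝ] carrier →ₗ[ℝ] carrier
  ι_deg : ∀ (v : X) (i : ℤ), ∀ a ∈ deg i, ι v a ∈ deg (i - 1)
  ι_ι : ∀ (v w : X) (a : carrier), ι v (ι w a) = - ι w (ι v a)
  cartan : ∀ (v w : X) (a : carrier),
      (d (ι v (ι w a)) + ι v (d (ι w a))) - ι w (d (ι v a) + ι v (d a)) = ι ⁅v, w⁆ a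

attribute [instance] CartanCalculus.addCommGroup CartanCalculus.module
  CartanCalculus.lieRingX CartanCalculus.lieAlgebraX

namespace CartanCalculus

/-- The Lie derivative `𝓛_v = d ∘ ι_v + ι_v ∘ d`. -/
def L (C : CartanCalculus) (v : C.X) : C.carrier →ₗ[ℝ] C.carrier :=
  C.d ∘ₗ C.ι v + C.ι v ∘ₗ C.d

/-- Iterated contraction: `iotaL [v₁, …, v_k] = ι_{v_k} ∘ ⋯ ∘ ι_{v₁}`, i.e. the
contraction `ι(v₁ ∧ ⋯ ∧ v_k)` (`ι_{v₁}` acts first). -/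
def iotaL (C : CartanCalculus) : List C.X → C.carrier →ₗ[ℝ] C.carrier
  | [] => LinearMap.id
  | v :: vs => (C.iotaL vs).comp (C.ι v)

end CartanCalculus

/-- Interpret a list as a `Fin k`-tuple (junk value `0` out of range). -/
def listToFun {α : Type} [Zero α] (k : ℕ) (l : List α) : Fin k → α :=
  fun m => l.getD m.val 0

/-- A map `𝔤^k → W` is multilinear. -/
def IsMultilinear {𝔤 : Type} [AddCommGroup 𝔤] [Module ℝ 𝔤] {W : Type}
    [AddCommGroup W] [Module ℝ W] {k : ℕ} (ψ : (Fin k → 𝔤) → W) : Prop :=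
  ∀ (x : Fin k → 𝔤) (i : Fin k),
    (∀ a b : 𝔤, ψ (Function.update x i (a + b))
        = ψ (Function.update x i a) + ψ (Function.update x i b)) ∧
    (∀ (c : ℝ) (a : 𝔤), ψ (Function.update x i (c • a)) = c • ψ (Function.update x i a))

/-- A map `𝔤^k → W` is alternating. -/
def IsAlternating {𝔤 : Type} {W : Type} [AddCommGroup W] {k : ℕ}
    (ψ : (Fin k → 𝔤) → W) : Prop :=
  ∀ (x : Fin k → 𝔤) (i j : Fin k), i ≠ j → x i = x j → ψ x = 0

/-- The Chevalley–Eilenberg differential of a `k`-cochain `ψ`: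
`(d_𝔤 ψ)(x₁,…,x_{k+1}) = Σ_{i<j} (-1)^{i+j} ψ([x_i,x_j], x₁, …, x̂_i, …, x̂_j, …, x_{k+1})`
(signs written for 1-based indices, as in the paper). -/
def dCE {𝔤 : Type} [LieRing 𝔤] [LieAlgebra ℝ 𝔤] {W : Type} [AddCommGroup W]
    [Module ℝ W] (k : ℕ) (ψ : (Fin k → 𝔤) → W) : (Fin (k + 1) → 𝔤) → W :=
  fun x => ∑ i : Fin (k + 1), ∑ j : Fin (k + 1),
    if (i : ℕ) < (j : ℕ) then
      ((-1 : ℝ) ^ ((i : ℕ) + (j : ℕ))) •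
        ψ (listToFun k (⁅x i, x j⁆ :: (((List.ofFn x).eraseIdx (j : ℕ)).eraseIdx (i : ℕ))))
    else 0

namespace CartanCalculus

/-- `σ_k(x₁,…,x_k) = ι(v_{x₁} ∧ ⋯ ∧ v_{x_k}) σ` where `v_x = ρ x`. -/
def lower (C : CartanCalculus) {𝔤 : Type} [LieRing 𝔤] [LieAlgebra ℝ 𝔤]
    (ρ : 𝔤 →ₗ⁅ℝ⁆ C.X) (k : ℕ) (σ : C.carrier) : (Fin k → 𝔤) → C.carrier :=
  fun x => C.iotaL (List.ofFn (fun i => ρ (x i))) σ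

/-- `F_k(x₁,…,x_k) = ι(v_{x₁} ∧ ⋯ ∧ v_{x_{k-1}}) (F x_k)`, with `F₀ := 0`. -/
def lowerF (C : CartanCalculus) {𝔤 : Type} [LieRing 𝔤] [LieAlgebra ℝ 𝔤]
    (ρ : 𝔤 →ₗ⁅ℝ⁆ C.X) (F : 𝔤 → C.carrier) : (k : ℕ) → (Fin k → 𝔤) → C.carrier
  | 0 => fun _ => 0
  | (k + 1) => fun x =>
      C.iotaL (List.ofFn (fun i : Fin k => ρ (x i.castSucc))) (F (x (Fin.last k)))

end CartanCalculus

/-- `ς(k) = -(-1)^{k(k+1)/2}`. -/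
def varsigma (k : ℕ) : ℝ := -((-1 : ℝ) ^ (k * (k + 1) / 2))

/-- A homotopy moment map for the invariant closed form `ω ∈ Ω^{n+1}`
(componentwise form of Def. 5.1 in [FRZ]): a family of alternating multilinear maps
`f_k : 𝔤^k → Ω^{n-k}` (`k = 1, …, n`) satisfying the moment map equations. -/
def IsMomentMap (C : CartanCalculus) {𝔤 : Type} [LieRing 𝔤] [LieAlgebra ℝ 𝔤]
    (ρ : 𝔤 →ₗ⁅ℝ⁆ C.X) (n : ℕ) (ω : C.carrier)
    (f : (k : ℕ) → (Fin k → 𝔤) → C.carrier) : Prop :=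
  (∀ k : ℕ, 1 ≤ k → k ≤ n →
      IsMultilinear (f k) ∧ IsAlternating (f k) ∧ ∀ x, f k x ∈ C.deg ((n : ℤ) - (k : ℤ))) ∧
  (∀ x : 𝔤, C.d (f 1 (fun _ => x)) = - C.ι (ρ x) ω) ∧
  (∀ k : ℕ, 2 ≤ k → k ≤ n → ∀ x : Fin k → 𝔤,
      (∑ i : Fin k, ∑ j : Fin k,
        if (i : ℕ) < (j : ℕ) then
          ((-1 : ℝ) ^ ((i : ℕ) + (j : ℕ) + 1)) •
            f (k - 1) (listToFun (k - 1)
              (⁅x i, x j⁆ :: (((List.ofFn x).eraseIdx (j : ℕ)).eraseIdx (i : ℕ))))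
        else 0)
      = C.d (f k x) + varsigma k • C.lower ρ k ω x) ∧
  (∀ x : Fin (n + 1) → 𝔤,
      (∑ i : Fin (n + 1), ∑ j : Fin (n + 1),
        if (i : ℕ) < (j : ℕ) then
          ((-1 : ℝ) ^ ((i : ℕ) + (j : ℕ) + 1)) •
            f n (listToFun n
              (⁅x i, x j⁆ :: (((List.ofFn x).eraseIdx (j : ℕ)).eraseIdx (i : ℕ))))
        else 0)
      = varsigma (n + 1) • C.lower ρ (n + 1) ω x)

/-!
The theorem is the invariant case of the extended Cartan formula
`(-1)^n d ι(v) = ι(∂v) + ι(v) d + ∑_i (-1)^i ι(v_1 ∧ ⋯ v̂_i ⋯ ∧ v_n) 𝓛_{v_i}`,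
where `v = v_1 ∧ ⋯ ∧ v_n` and `∂v = ∑_{i<j} (-1)^{i+j} [v_i, v_j] ∧ v_1 ∧ ⋯ v̂_i ⋯ v̂_j ⋯ ∧ v_n`.
The formula is proved by induction on `n`, applying the case of `v_2 ∧ ⋯ ∧ v_n` to `ι_{v_1} σ`:
commuting `𝓛_{v_i}` past `ι_{v_1}` produces exactly the terms of `∂v` that involve `[v_1, v_i]`.
-/

theorem ofFn_listToFun {α : Type} [Zero α] {k : ℕ} {l : List α} (hl : l.length = k) :
    List.ofFn (listToFun k l) = l := by
  subst hl
  exact List.ext_getElem List.length_ofFn fun _ _ hi => by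
    rw [List.getElem_ofFn, listToFun, List.getD_eq_getElem _ _ hi]

theorem ofFn_removeNth {α : Type*} {n : ℕ} (x : Fin (n + 1) → α) (i : Fin (n + 1)) :
    List.ofFn (i.removeNth x) = (List.ofFn x).eraseIdx i := by
  have length_eq : (List.ofFn (i.removeNth x)).length = ((List.ofFn x).eraseIdx i).length := by
    grind
  refine List.ext_getElem length_eq fun m _ _ => ?_
  simp only [List.getElem_eraseIdx, List.getElem_ofFn, Fin.removeNth_apply, Fin.succAbove,
    Fin.lt_def, apply_ite x, Fin.castSucc_mk, Fin.succ_mk]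
  rfl

namespace CartanCalculus

variable (C : CartanCalculus)

theorem iotaL_cons_apply (v : C.X) (vs : List C.X) (σ : C.carrier) :
    C.iotaL (v :: vs) σ = C.iotaL vs (C.ι v σ) :=
  rfl

theorem iotaL_cons_cons_swap (v w : C.X) (vs : List C.X) (σ : C.carrier) :
    C.iotaL (v :: w :: vs) σ = -C.iotaL (v :: vs) (C.ι w σ) := by
  rw [iotaL_cons_apply, iotaL_cons_apply, C.ι_ι w v, map_neg, iotaL_cons_apply]

theorem d_ι (v : C.X) (σ : C.carrier) : C.d (C.ι v σ) = C.L v σ - C.ι v (C.d σ) :=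
  (add_sub_cancel_right _ _).symm

theorem L_ι (v w : C.X) (σ : C.carrier) :
    C.L v (C.ι w σ) = C.ι w (C.L v σ) - C.ι ⁅w, v⁆ σ := by
  rw [← lie_skew, map_neg, LinearMap.neg_apply, sub_neg_eq_add]
  exact eq_add_of_sub_eq' (C.cartan v w σ)

/-- Contraction with the Chevalley–Eilenberg boundary
`∂v = ∑_{i<j} (-1)^{i+j} [v_i, v_j] ∧ v_1 ∧ ⋯ v̂_i ⋯ v̂_j ⋯ ∧ v_n` of `v = v_1 ∧ ⋯ ∧ v_n`, through
which `dCE` acts on the maps `σ_k`. The multivector `∂v` itself is not formed, and omitted factors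
are list erasures, as in `dCE`. -/
def iotaBoundary {n : ℕ} (v : Fin n → C.X) (σ : C.carrier) : C.carrier :=
  ∑ i : Fin n, ∑ j : Fin n,
    if (i : ℕ) < (j : ℕ) then
      ((-1 : ℝ) ^ ((i : ℕ) + (j : ℕ))) •
        C.iotaL (⁅v i, v j⁆ :: ((List.ofFn v).eraseIdx (j : ℕ)).eraseIdx (i : ℕ)) σ
    else 0

theorem iotaBoundary_cons {n : ℕ} (w : C.X) (v : Fin n → C.X) (σ : C.carrier) :
    C.iotaBoundary (Fin.cons w v : Fin (n + 1) → C.X) σ =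
      ∑ j : Fin n, ((-1 : ℝ) ^ ((j : ℕ) + 1)) •
          C.iotaL (⁅w, v j⁆ :: (List.ofFn v).eraseIdx (j : ℕ)) σ
        - C.iotaBoundary v (C.ι w σ) := by
  have sign_shift (i j : ℕ) : (-1 : ℝ) ^ (i + 1 + (j + 1)) = (-1) ^ (i + j) := by ring
  simp only [iotaBoundary, Fin.sum_univ_succ (n := n), Fin.cons_zero, Fin.cons_succ, Fin.val_zero,
    Fin.val_succ, List.ofFn_cons, List.eraseIdx_cons_zero, List.eraseIdx_cons_succ, Nat.succ_pos,
    Nat.not_lt_zero, Nat.add_lt_add_iff_right, if_true, if_false, zero_add,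
    iotaL_cons_cons_swap, sign_shift, sub_eq_add_neg, ← Finset.sum_neg_distrib, smul_neg,
    neg_ite, neg_zero]

/-- The sum `∑_i (-1)^i ι(v_1 ∧ ⋯ v̂_i ⋯ ∧ v_n) 𝓛_{v_i} σ` (signs for 1-based indices), which in the
extended Cartan formula measures how far `σ` is from being invariant along `v`. -/
def iotaLieDerivative {n : ℕ} (v : Fin n → C.X) (σ : C.carrier) : C.carrier :=
  ∑ i : Fin n, ((-1 : ℝ) ^ ((i : ℕ) + 1)) •
    C.iotaL ((List.ofFn v).eraseIdx (i : ℕ)) (C.L (v i) σ)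

theorem iotaLieDerivative_cons {n : ℕ} (w : C.X) (v : Fin n → C.X) (σ : C.carrier) :
    C.iotaLieDerivative (Fin.cons w v : Fin (n + 1) → C.X) σ =
      -C.iotaL (List.ofFn v) (C.L w σ) - C.iotaLieDerivative v (C.ι w σ)
        - ∑ i : Fin n, ((-1 : ℝ) ^ ((i : ℕ) + 1)) •
            C.iotaL (⁅w, v i⁆ :: (List.ofFn v).eraseIdx (i : ℕ)) σ := by
  simp only [iotaLieDerivative, Fin.sum_univ_succ, Fin.cons_zero, Fin.cons_succ, Fin.val_zero,
    Fin.val_succ, List.ofFn_cons, List.eraseIdx_cons_zero, List.eraseIdx_cons_succ, zero_add,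
    pow_one, one_smul, iotaL_cons_apply, pow_succ _ (_ + 1), mul_neg_one, neg_smul, L_ι,
    map_sub, smul_sub, Finset.sum_sub_distrib, Finset.sum_neg_distrib]
  abel

theorem neg_one_pow_smul_d_iotaL {n : ℕ} (v : Fin n → C.X) (σ : C.carrier) :
    ((-1 : ℝ) ^ n) • C.d (C.iotaL (List.ofFn v) σ) =
      C.iotaBoundary v σ + C.iotaL (List.ofFn v) (C.d σ) + C.iotaLieDerivative v σ := by
  induction v using Fin.consInduction generalizing σ with
  | elim0 => simp [iotaBoundary, iotaLieDerivative, iotaL]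
  | cons w v ih =>
    rw [List.ofFn_cons, iotaL_cons_apply, iotaL_cons_apply, iotaBoundary_cons,
      iotaLieDerivative_cons, pow_succ, mul_neg_one, neg_smul, ih, d_ι, map_sub]
    abel

variable {𝔤 : Type} [LieRing 𝔤] [LieAlgebra ℝ 𝔤] (ρ : 𝔤 →ₗ⁅ℝ⁆ C.X)

theorem lower_listToFun {k : ℕ} {l : List 𝔤} (hl : l.length = k) (σ : C.carrier) :
    C.lower ρ k σ (listToFun k l) = C.iotaL (l.map ρ) σ := by
  change C.iotaL (List.ofFn (ρ ∘ listToFun k l)) σ = _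
  rw [← List.map_ofFn, ofFn_listToFun hl]

theorem lower_removeNth {k : ℕ} (x : Fin (k + 1) → 𝔤) (i : Fin (k + 1)) (σ : C.carrier) :
    C.lower ρ k σ (i.removeNth x) =
      C.iotaL ((List.ofFn fun j => ρ (x j)).eraseIdx (i : ℕ)) σ := by
  rw [← ofFn_removeNth]
  rfl

theorem dCE_lower {k : ℕ} (x : Fin (k + 1) → 𝔤) (σ : C.carrier) :
    dCE k (C.lower ρ k σ) x = C.iotaBoundary (fun i => ρ (x i)) σ := by
  rw [dCE, iotaBoundary]
  refine Finset.sum_congr rfl fun i _ => Finset.sum_congr rfl fun j _ => ?_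
  refine ite_congr rfl (fun hij => ?_) fun _ => rfl
  have length_eq :
      (⁅x i, x j⁆ :: ((List.ofFn x).eraseIdx (j : ℕ)).eraseIdx (i : ℕ)).length = k := by
    grind
  rw [lower_listToFun C ρ length_eq]
  simp only [List.map_cons, LieHom.map_lie, ← List.eraseIdx_map, List.map_ofFn, Function.comp_def]

end CartanCalculus

theorem tilde_chain_map_general (C : CartanCalculus) {𝔤 : Type} [LieRing 𝔤] [LieAlgebra ℝ 𝔤]
    (ρ : 𝔤 →ₗ⁅ℝ⁆ C.X) (σ : C.carrier) (k : ℕ) (x : Fin (k + 1) → 𝔤) :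
    ((-1 : ℝ) ^ (k + 1)) • C.d (C.lower ρ (k + 1) σ x) =
      dCE k (C.lower ρ k σ) x + C.lower ρ (k + 1) (C.d σ) x
        + ∑ i : Fin (k + 1), ((-1 : ℝ) ^ ((i : ℕ) + 1)) •
            C.lower ρ k (C.L (ρ (x i)) σ) (i.removeNth x) := by
  simp only [C.dCE_lower, C.lower_removeNth]
  exact C.neg_one_pow_smul_d_iotaL (fun i => ρ (x i)) σ

/-- the tilde map is a chain map, Lemma 2.3 of the paper.
For invariant `σ ∈ Ω^N` (`N ≥ 0`): `d(σ₁ x) = -(dσ)₁ x` for all `x ∈ 𝔤`, and for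
every `k ≥ 2` (written `k+1` with `k ≥ 1`) and all `x₁,…,x_{k+1} ∈ 𝔤`:
`(-1)^{k+1} d(σ_{k+1}(x)) = (d_𝔤 σ_k)(x) + (dσ)_{k+1}(x)`; equivalently
`d_tot σ̃ = (dσ)~`. -/
theorem tilde_chain_map (C : CartanCalculus) {𝔤 : Type} [LieRing 𝔤] [LieAlgebra ℝ 𝔤]
    (ρ : 𝔤 →ₗ⁅ℝ⁆ C.X) (N : ℤ) (hN : 0 ≤ N) (σ : C.carrier) (hσ : σ ∈ C.deg N)
    (hinv : ∀ x : 𝔤, C.L (ρ x) σ = 0) :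
    (∀ x : 𝔤, C.d (C.ι (ρ x) σ) = - C.ι (ρ x) (C.d σ)) ∧
    (∀ k : ℕ, 1 ≤ k → ∀ x : Fin (k + 1) → 𝔤,
      ((-1 : ℝ) ^ (k + 1)) • C.d (C.lower ρ (k + 1) σ x)
        = dCE k (C.lower ρ k σ) x + C.lower ρ (k + 1) (C.d σ) x) := by
  refine ⟨fun x => eq_neg_of_add_eq_zero_left (hinv x), fun k _ x => ?_⟩
  simpa [hinv, CartanCalculus.lower] using tilde_chain_map_general C ρ σ k x
end

section
/- (Cocycles of the cone complex) Let φ_k : 𝔤^k → Ω^{n−k} (k = 1,…,n) be alternating multilinear maps. Then the pair (ω, φ) is a cocycle for the cone differential D(ω,φ) := (dω, ω̃ − d_tot φ) — explicitly: dω = 0, d(φ_1(x)) = −ι_{v_x}ω for all x ∈ 𝔤, d_𝔤φ_{k−1} + (−1)^k·dφ_k = (−1)^{k−1}·ω_k for all 2 ≤ k ≤ n, and d_𝔤φ_n = (−1)^n·ω_{n+1} — if and only if dω = 0 and the maps f_k := ς(k)·φ_k (k = 1,…,n) form a homotopy moment map for ω. -/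
/-!
The sum in the moment map equations is `-d_𝔤 f_{k-1}`, and `ς(k+1) = (-1)^{k+1} ς(k)`. Hence
multiplying the cocycle equation for `d_𝔤 φ_k` by the invertible scalar `-ς(k)` turns it into the
moment map equation for `d_𝔤 f_k`, where `f_k = ς(k) φ_k`; the last equation is the case in which
the term `dφ_{k+1}` vanishes.
-/

theorem varsigma_one : varsigma 1 = 1 := by
  norm_num [varsigma]

theorem varsigma_ne_zero (k : ℕ) : varsigma k ≠ 0 :=
  neg_ne_zero.2 (pow_ne_zero _ (neg_ne_zero.2 one_ne_zero))

theorem varsigma_succ (k : ℕ) : varsigma (k + 1) = (-1 : ℝ) ^ (k + 1) * varsigma k := by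
  have triangular_succ : (k + 1) * (k + 1 + 1) / 2 = k * (k + 1) / 2 + (k + 1) := by
    rw [← Nat.add_mul_div_right _ _ two_pos]
    ring_nf
  rw [varsigma, varsigma, triangular_succ, pow_add]
  ring

section ConstSMul

variable {𝔤 W : Type} {R : Type*} [AddCommGroup W] {k : ℕ} {ψ : (Fin k → 𝔤) → W}

theorem IsMultilinear.const_smul [AddCommGroup 𝔤] [Module ℝ 𝔤] [Module ℝ W] [DistribSMul R W]
    [SMulCommClass R ℝ W] (hψ : IsMultilinear ψ) (c : R) :
    IsMultilinear (fun x => c • ψ x) := fun x i =>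
  ⟨fun a b => by simp only [(hψ x i).1, smul_add],
    fun r a => by simp only [(hψ x i).2, smul_comm c r]⟩

theorem IsAlternating.const_smul [SMulZeroClass R W] (hψ : IsAlternating ψ) (c : R) :
    IsAlternating (fun x => c • ψ x) := fun x i j hij hx => by
  simp only [hψ x i j hij hx, smul_zero]

end ConstSMul

section ChevalleyEilenberg

variable {𝔤 W : Type} [LieRing 𝔤] [LieAlgebra ℝ 𝔤] [AddCommGroup W] [Module ℝ W]

theorem dCE_const_smul {R : Type*} [DistribSMul R W] [SMulCommClass R ℝ W] (k : ℕ) (c : R)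
    (ψ : (Fin k → 𝔤) → W) (x : Fin (k + 1) → 𝔤) :
    dCE k (fun y => c • ψ y) x = c • dCE k ψ x := by
  simp only [dCE, Finset.smul_sum, smul_ite, smul_zero, smul_comm c]

theorem sum_neg_one_pow_succ_smul_bracket_eq_neg_dCE (k : ℕ) (ψ : (Fin k → 𝔤) → W)
    (x : Fin (k + 1) → 𝔤) :
    (∑ i : Fin (k + 1), ∑ j : Fin (k + 1),
      if (i : ℕ) < (j : ℕ) then
        ((-1 : ℝ) ^ ((i : ℕ) + (j : ℕ) + 1)) •
          ψ (listToFun k (⁅x i, x j⁆ :: (((List.ofFn x).eraseIdx (j : ℕ)).eraseIdx (i : ℕ))))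
      else 0) = -dCE k ψ x := by
  simp only [dCE, ← Finset.sum_neg_distrib, pow_succ, mul_neg_one, neg_smul, neg_ite, neg_zero]

end ChevalleyEilenberg

theorem add_neg_one_pow_smul_eq_iff_varsigma_smul {W : Type*} [AddCommGroup W] [Module ℝ W]
    (k : ℕ) (a b e : W) :
    a + ((-1 : ℝ) ^ (k + 1)) • b = ((-1 : ℝ) ^ k) • e ↔
      -(varsigma k • a) = varsigma (k + 1) • b + varsigma (k + 1) • e := by
  have sub_eq_smul_sub :
      -(varsigma k • a) - (varsigma (k + 1) • b + varsigma (k + 1) • e) =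
        (-varsigma k) • (a + ((-1 : ℝ) ^ (k + 1)) • b - ((-1 : ℝ) ^ k) • e) := by
    rw [varsigma_succ]
    module
  rw [← sub_eq_zero, ← sub_eq_zero (a := -(varsigma k • a)), sub_eq_smul_sub,
    smul_eq_zero_iff_right (neg_ne_zero.2 (varsigma_ne_zero k))]

theorem eq_neg_one_pow_smul_iff_varsigma_smul {W : Type*} [AddCommGroup W] [Module ℝ W]
    (k : ℕ) (a e : W) :
    a = ((-1 : ℝ) ^ k) • e ↔ -(varsigma k • a) = varsigma (k + 1) • e := by
  simpa only [smul_zero, add_zero, zero_add] using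
    add_neg_one_pow_smul_eq_iff_varsigma_smul k a 0 e

section MomentMap

variable (C : CartanCalculus) {𝔤 : Type} [LieRing 𝔤] [LieAlgebra ℝ 𝔤] (ρ : 𝔤 →ₗ⁅ℝ⁆ C.X)
  (n : ℕ) (ω : C.carrier)

theorem isMomentMap_iff_dCE (f : (k : ℕ) → (Fin k → 𝔤) → C.carrier) :
    IsMomentMap C ρ n ω f ↔
      (∀ k : ℕ, 1 ≤ k → k ≤ n →
        IsMultilinear (f k) ∧ IsAlternating (f k) ∧ ∀ x, f k x ∈ C.deg ((n : ℤ) - (k : ℤ))) ∧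
      (∀ x : 𝔤, C.d (f 1 (fun _ => x)) = - C.ι (ρ x) ω) ∧
      (∀ k : ℕ, 1 ≤ k → k + 1 ≤ n → ∀ x : Fin (k + 1) → 𝔤,
        -dCE k (f k) x = C.d (f (k + 1) x) + varsigma (k + 1) • C.lower ρ (k + 1) ω x) ∧
      (∀ x : Fin (n + 1) → 𝔤,
        -dCE n (f n) x = varsigma (n + 1) • C.lower ρ (n + 1) ω x) := by
  simp only [IsMomentMap, ← sum_neg_one_pow_succ_smul_bracket_eq_neg_dCE]
  refine and_congr_right fun _ => and_congr_right fun _ => and_congr_left fun _ => ?_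
  constructor
  · intro h k hk hkn
    exact h (k + 1) (Nat.succ_le_succ hk) hkn
  · rintro h (_ | k) hk hkn
    · exact absurd hk (by decide)
    · exact h k (Nat.le_of_succ_le_succ hk) hkn

theorem cone_cocycle_iff_momentMap_general
    (φ : (k : ℕ) → (Fin k → 𝔤) → C.carrier)
    (hmult : ∀ k : ℕ, 1 ≤ k → k ≤ n → IsMultilinear (φ k))
    (halt : ∀ k : ℕ, 1 ≤ k → k ≤ n → IsAlternating (φ k))
    (hdeg : ∀ k : ℕ, 1 ≤ k → k ≤ n → ∀ x, φ k x ∈ C.deg ((n : ℤ) - (k : ℤ))) :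
    ((∀ x : 𝔤, C.d (φ 1 (fun _ => x)) = - C.ι (ρ x) ω) ∧
     (∀ k : ℕ, 1 ≤ k → k + 1 ≤ n → ∀ x : Fin (k + 1) → 𝔤,
        dCE k (φ k) x + ((-1 : ℝ) ^ (k + 1)) • C.d (φ (k + 1) x)
          = ((-1 : ℝ) ^ k) • C.lower ρ (k + 1) ω x) ∧
     (∀ x : Fin (n + 1) → 𝔤,
        dCE n (φ n) x = ((-1 : ℝ) ^ n) • C.lower ρ (n + 1) ω x))
    ↔ IsMomentMap C ρ n ω (fun k x => varsigma k • φ k x) := by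
  have cochain_smul : ∀ k : ℕ, 1 ≤ k → k ≤ n →
      IsMultilinear (fun x => varsigma k • φ k x) ∧
      IsAlternating (fun x => varsigma k • φ k x) ∧
      ∀ x, varsigma k • φ k x ∈ C.deg ((n : ℤ) - (k : ℤ)) := fun k hk hkn =>
    ⟨(hmult k hk hkn).const_smul _, (halt k hk hkn).const_smul _,
      fun x => (C.deg _).smul_mem _ (hdeg k hk hkn x)⟩
  rw [isMomentMap_iff_dCE, and_iff_right cochain_smul]
  simp only [varsigma_one, one_smul, dCE_const_smul, map_smul]
  exact and_congr_right' <| and_congr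
    (forall₄_congr fun k _ _ _ => add_neg_one_pow_smul_eq_iff_varsigma_smul k _ _ _)
    (forall_congr' fun _ => eq_neg_one_pow_smul_iff_varsigma_smul n _ _)

end MomentMap

/-- cocycles of the cone complex, Prop. 3.1 of the paper.
For alternating multilinear maps `φ_k : 𝔤^k → Ω^{n-k}` (`k = 1,…,n`), the pair
`(ω, φ)` is a cocycle for the cone differential `D(ω,φ) = (dω, ω̃ - d_tot φ)` —
explicitly `dω = 0`, `d(φ₁ x) = -ι_{v_x}ω`,
`d_𝔤 φ_k + (-1)^{k+1} dφ_{k+1} = (-1)^k ω_{k+1}` for `1 ≤ k`, `k+1 ≤ n`, and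
`d_𝔤 φ_n = (-1)^n ω_{n+1}` — iff `dω = 0` and `f_k := ς(k)·φ_k` is a homotopy
moment map for `ω`. (Closedness of `ω` is not assumed.) -/
theorem cone_cocycle_iff_momentMap (C : CartanCalculus) {𝔤 : Type} [LieRing 𝔤]
    [LieAlgebra ℝ 𝔤] (ρ : 𝔤 →ₗ⁅ℝ⁆ C.X) (n : ℕ) (hn : 1 ≤ n) (ω : C.carrier)
    (hω : ω ∈ C.deg ((n : ℤ) + 1))
    (hinv : ∀ x : 𝔤, C.L (ρ x) ω = 0)
    (φ : (k : ℕ) → (Fin k → 𝔤) → C.carrier)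
    (hmult : ∀ k : ℕ, 1 ≤ k → k ≤ n → IsMultilinear (φ k))
    (halt : ∀ k : ℕ, 1 ≤ k → k ≤ n → IsAlternating (φ k))
    (hdeg : ∀ k : ℕ, 1 ≤ k → k ≤ n → ∀ x, φ k x ∈ C.deg ((n : ℤ) - (k : ℤ))) :
    (C.d ω = 0 ∧
     (∀ x : 𝔤, C.d (φ 1 (fun _ => x)) = - C.ι (ρ x) ω) ∧
     (∀ k : ℕ, 1 ≤ k → k + 1 ≤ n → ∀ x : Fin (k + 1) → 𝔤,
        dCE k (φ k) x + ((-1 : ℝ) ^ (k + 1)) • C.d (φ (k + 1) x)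
          = ((-1 : ℝ) ^ k) • C.lower ρ (k + 1) ω x) ∧
     (∀ x : Fin (n + 1) → 𝔤,
        dCE n (φ n) x = ((-1 : ℝ) ^ n) • C.lower ρ (n + 1) ω x))
    ↔ (C.d ω = 0 ∧ IsMomentMap C ρ n ω (fun k x => varsigma k • φ k x)) :=
  and_congr_right fun _ => cone_cocycle_iff_momentMap_general C ρ n ω φ hmult halt hdeg
end
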